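/- For every positive integer i it holds that μ_i = ⌊ log_φ (2 w_+(i)) ⌋, where log_φ denotes the logarithm to base φ. -/

import Mathlib

open Real

noncomputable def phi : ℝ := (1 + Real.sqrt 5) / 2

noncomputable def W (i : ℕ) : ℕ → ℤ
  | 0 => ⌊phi ^ 2 * (⌊phi * i⌋ : ℝ)⌋ - ⌊phi * (⌊phi * i⌋ : ℝ)⌋
  | 1 => ⌊phi * (⌊phi * i⌋ : ℝ)⌋
  | 2 => ⌊phi ^ 2 * (⌊phi * i⌋ : ℝ)⌋
  | (k + 3) => W i (k + 2) + W i (k + 1)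

noncomputable def wplus (i : ℕ) : ℝ := phi⁻¹ ^ 2 * (W i 1 : ℝ) + phi⁻¹ * (W i 2 : ℝ)

noncomputable def wminus (i : ℕ) : ℝ := phi ^ 2 * (W i 1 : ℝ) - phi * (W i 2 : ℝ)

noncomputable def eta (i : ℕ) : ℝ := -(wplus i * wminus i)


noncomputable def mu (i : ℕ) : ℕ := sInf {m : ℕ | 0 < m ∧ 2 * W i 1 < (Nat.fib (m + 2) : ℤ)}

/-!
Write `ψ` for the conjugate of `φ`. Both `F_k` and `W_{i,k}` obey the Fibonacci recurrence, and
the Binet formulas `√5 F_k = φ ^ k - ψ ^ k` and `√5 W_{i,k} = φ ^ k w₊ - ψ ^ k w₋` give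
`φ (2 w₊ - φ ^ n) = √5 (2 W_{i,1} - F_{n+1}) + ψ (2 w₋ - ψ ^ n)`.
As `-1 < w₋ ≤ 0`, the last term is smaller than `√5` in absolute value, so `2 w₊ - φ ^ n` has the
sign of the integer `2 W_{i,1} - F_{n+1}` when the latter is nonzero. When it vanishes,
`2 w₊ < φ ^ n` would force `0 < -2 w₋ < -ψ ^ n`, hence `4 η = (2 w₊) (-2 w₋) < |φ ψ| ^ n = 1`,
whereas `η = -w₊ w₋` is a positive integer. Thus `2 W_{i,1} < F_{n+1}` is equivalent to
`2 w₊ < φ ^ n`.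
-/

open scoped goldenRatio

theorem floor_logb_eq_iff {b x : ℝ} (hb : 1 < b) (hx : 0 < x) {k : ℤ} :
    ⌊logb b x⌋ = k ↔ b ^ k ≤ x ∧ x < b ^ (k + 1) := by
  rw [Int.floor_eq_iff, le_logb_iff_rpow_le hb hx, logb_lt_iff_lt_rpow hb hx, ← Int.cast_one,
    ← Int.cast_add, rpow_intCast, rpow_intCast]

theorem abs_goldenConj_lt_one : |ψ| < 1 :=
  abs_lt.2 ⟨neg_one_lt_goldenConj, goldenConj_neg.trans one_pos⟩

theorem sqrt_five_mul_fib (n : ℕ) : √5 * Nat.fib n = φ ^ n - ψ ^ n := by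
  rw [coe_fib_eq, mul_div_cancel₀ _ (by positivity)]

theorem phi_eq_goldenRatio : phi = φ := rfl

section Wythoff

variable {i : ℕ}

theorem W_two (i : ℕ) : W i 2 = W i 1 + ⌊φ * i⌋ := by
  simp only [W, phi_eq_goldenRatio, goldenRatio_sq, add_mul, one_mul, Int.floor_add_intCast]

theorem W_add_two (i : ℕ) : ∀ k, W i (k + 2) = W i (k + 1) + W i k
  | 0 => by simp only [W, add_sub_cancel]
  | _ + 1 => rfl

theorem floor_goldenRatio_mul_pos {x : ℝ} (hx : 1 ≤ x) : 0 < ⌊φ * x⌋ :=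
  Int.floor_pos.2 (one_le_mul_of_one_le_of_one_le one_lt_goldenRatio.le hx)

theorem floor_goldenRatio_mul_natCast_pos (hi : 0 < i) : 0 < ⌊φ * i⌋ :=
  floor_goldenRatio_mul_pos (by exact_mod_cast hi)

theorem W_one_pos (hi : 0 < i) : 0 < W i 1 :=
  floor_goldenRatio_mul_pos (by exact_mod_cast floor_goldenRatio_mul_natCast_pos hi)

theorem wplus_eq (i : ℕ) : wplus i = ψ ^ 2 * W i 1 - ψ * W i 2 := by
  rw [wplus, phi_eq_goldenRatio, inv_goldenRatio]
  ring

theorem wplus_pos (hi : 0 < i) : 0 < wplus i := by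
  have hW₁ : (0 : ℝ) < W i 1 := by exact_mod_cast W_one_pos hi
  have hW₂ : (0 : ℝ) < W i 2 := by
    rw [W_two]
    exact_mod_cast add_pos (W_one_pos hi) (floor_goldenRatio_mul_natCast_pos hi)
  have hφ : 0 < phi := goldenRatio_pos
  rw [wplus]
  positivity

theorem wminus_eq_neg_fract (i : ℕ) : wminus i = -Int.fract (φ * ⌊φ * i⌋) := by
  have hW : W i 1 = ⌊φ * ⌊φ * i⌋⌋ := rfl
  rw [wminus, W_two, phi_eq_goldenRatio, goldenRatio_sq, Int.fract, ← hW]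
  push_cast
  ring

theorem neg_one_lt_wminus (i : ℕ) : -1 < wminus i := by
  rw [wminus_eq_neg_fract]
  exact neg_lt_neg (Int.fract_lt_one _)

theorem wminus_nonpos (i : ℕ) : wminus i ≤ 0 := by
  rw [wminus_eq_neg_fract]
  exact neg_nonpos.2 (Int.fract_nonneg _)

theorem wminus_neg (hi : 0 < i) : wminus i < 0 := by
  rw [wminus_eq_neg_fract, neg_lt_zero, Int.fract_pos]
  exact (goldenRatio_irrational.mul_intCast (floor_goldenRatio_mul_natCast_pos hi).ne').ne_int _

theorem eta_eq (i : ℕ) : eta i = ((W i 2 ^ 2 - W i 1 * W i 2 - W i 1 ^ 2 : ℤ) : ℝ) := by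
  rw [eta, wplus_eq, wminus, phi_eq_goldenRatio]
  push_cast
  linear_combination
    (-(φ * ψ * W i 1 ^ 2) + W i 1 ^ 2 + (φ + ψ) * W i 1 * W i 2 - W i 2 ^ 2) *
      goldenRatio_mul_goldenConj - W i 1 * W i 2 * goldenRatio_add_goldenConj

theorem one_le_eta (hi : 0 < i) : 1 ≤ eta i := by
  have hη : 0 < eta i := neg_pos.2 (mul_neg_of_pos_of_neg (wplus_pos hi) (wminus_neg hi))
  rw [eta_eq] at hη ⊢
  exact_mod_cast hη

theorem sqrt_five_mul_W (i : ℕ) : ∀ k, √5 * W i k = φ ^ k * wplus i - ψ ^ k * wminus i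
  | 0 => by
    have hW : (W i 2 : ℝ) = W i 1 + W i 0 := by exact_mod_cast W_add_two i 0
    rw [wplus_eq, wminus, phi_eq_goldenRatio, ← goldenRatio_sub_goldenConj]
    linear_combination
      (ψ - φ) * hW + (φ - ψ) * W i 1 * goldenRatio_add_goldenConj
  | 1 => by
    rw [wplus_eq, wminus, phi_eq_goldenRatio, ← goldenRatio_sub_goldenConj]
    linear_combination (φ - ψ) * W i 1 * goldenRatio_mul_goldenConj
  | k + 2 => by
    rw [W_add_two]
    push_cast
    linear_combination sqrt_five_mul_W i (k + 1) + sqrt_five_mul_W i k -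
      φ ^ k * wplus i * goldenRatio_sq + ψ ^ k * wminus i * goldenConj_sq

theorem goldenRatio_mul_two_mul_wplus_sub_pow (i n : ℕ) :
    φ * (2 * wplus i - φ ^ n) =
      √5 * (2 * W i 1 - Nat.fib (n + 1)) + ψ * (2 * wminus i - ψ ^ n) := by
  linear_combination sqrt_five_mul_fib (n + 1) - 2 * sqrt_five_mul_W i 1

theorem abs_goldenConj_mul_two_mul_wminus_sub_pow_lt (i n : ℕ) :
    |ψ * (2 * wminus i - ψ ^ n)| < √5 := by
  have hψ : |ψ ^ n| ≤ 1 := by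
    rw [abs_pow]
    exact pow_le_one₀ (abs_nonneg ψ) abs_goldenConj_lt_one.le
  have hw : |2 * wminus i - ψ ^ n| ≤ 3 := by
    have := abs_le.1 hψ
    rw [abs_le]
    constructor <;> linarith [neg_one_lt_wminus i, wminus_nonpos i]
  calc |ψ * (2 * wminus i - ψ ^ n)| = -ψ * |2 * wminus i - ψ ^ n| := by
        rw [abs_mul, abs_of_neg goldenConj_neg]
    _ ≤ -ψ * 3 := mul_le_mul_of_nonneg_left hw (neg_nonneg.2 goldenConj_neg.le)
    _ < φ - ψ := by linarith [neg_one_lt_goldenConj, goldenRatio_add_goldenConj]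
    _ = √5 := goldenRatio_sub_goldenConj

theorem two_mul_wplus_lt_pow_of_lt_fib {n : ℕ} (h : 2 * W i 1 < Nat.fib (n + 1)) :
    2 * wplus i < φ ^ n := by
  have hD : (2 * W i 1 - Nat.fib (n + 1) : ℝ) ≤ -1 := by
    have : (2 * W i 1 + 1 : ℝ) ≤ Nat.fib (n + 1) := by exact_mod_cast h
    linarith
  have hneg : φ * (2 * wplus i - φ ^ n) < 0 := by
    rw [goldenRatio_mul_two_mul_wplus_sub_pow]
    linarith [mul_le_mul_of_nonneg_left hD (sqrt_nonneg 5),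
      (abs_lt.1 (abs_goldenConj_mul_two_mul_wminus_sub_pow_lt i n)).2]
  exact sub_neg.1 (neg_of_mul_neg_right hneg goldenRatio_pos.le)

theorem pow_le_two_mul_wplus_of_fib_lt {n : ℕ} (h : Nat.fib (n + 1) < 2 * W i 1) :
    φ ^ n ≤ 2 * wplus i := by
  have hD : (1 : ℝ) ≤ 2 * W i 1 - Nat.fib (n + 1) := by
    have : (Nat.fib (n + 1) + 1 : ℝ) ≤ 2 * W i 1 := by exact_mod_cast h
    linarith
  have hpos : 0 < φ * (2 * wplus i - φ ^ n) := by
    rw [goldenRatio_mul_two_mul_wplus_sub_pow]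
    linarith [mul_le_mul_of_nonneg_left hD (sqrt_nonneg 5),
      (abs_lt.1 (abs_goldenConj_mul_two_mul_wminus_sub_pow_lt i n)).1]
  exact (sub_pos.1 (pos_of_mul_pos_right hpos goldenRatio_pos.le)).le

theorem pow_le_two_mul_wplus_of_fib_eq (hi : 0 < i) {n : ℕ} (h : Nat.fib (n + 1) = 2 * W i 1) :
    φ ^ n ≤ 2 * wplus i := by
  by_contra! hlt
  have hD : (2 * W i 1 : ℝ) - Nat.fib (n + 1) = 0 := by
    rw [sub_eq_zero]
    exact_mod_cast h.symm
  have hψ : -(2 * wminus i) < |ψ ^ n| := by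
    have hneg : ψ * (2 * wminus i - ψ ^ n) < 0 := by
      have hid := goldenRatio_mul_two_mul_wplus_sub_pow i n
      rw [hD, mul_zero, zero_add] at hid
      exact hid ▸ mul_neg_of_pos_of_neg goldenRatio_pos (sub_neg.2 hlt)
    linarith [pos_of_mul_neg_right hneg goldenConj_neg.le, neg_le_abs (ψ ^ n)]
  have hη : 4 * eta i < 1 :=
    calc 4 * eta i = 2 * wplus i * -(2 * wminus i) := by rw [eta]; ring
      _ < φ ^ n * |ψ ^ n| :=
        mul_lt_mul'' hlt hψ (by linarith [wplus_pos hi]) (by linarith [wminus_nonpos i])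
      _ = |(φ * ψ) ^ n| := by rw [mul_pow, abs_mul, abs_of_pos (pow_pos goldenRatio_pos n)]
      _ = 1 := by rw [goldenRatio_mul_goldenConj, abs_neg_one_pow]
  linarith [one_le_eta hi]

theorem two_mul_W_one_lt_fib_iff (hi : 0 < i) {n : ℕ} :
    2 * W i 1 < Nat.fib (n + 1) ↔ 2 * wplus i < φ ^ n := by
  refine ⟨two_mul_wplus_lt_pow_of_lt_fib, fun h ↦ ?_⟩
  contrapose! h
  exact h.lt_or_eq.elim pow_le_two_mul_wplus_of_fib_lt (pow_le_two_mul_wplus_of_fib_eq hi)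

theorem two_mul_W_one_lt_fib_mu_add_two (i : ℕ) : 2 * W i 1 < Nat.fib (mu i + 2) := by
  refine (Nat.sInf_mem (s := {m | 0 < m ∧ 2 * W i 1 < (Nat.fib (m + 2) : ℤ)}) ?_).2
  have := Nat.le_fib_self (n := (2 * W i 1).toNat + 7) (by lia)
  exact ⟨(2 * W i 1).toNat + 5, by lia, by lia⟩

theorem fib_mu_add_one_le (hi : 0 < i) : Nat.fib (mu i + 1) ≤ 2 * W i 1 := by
  have hW := W_one_pos hi
  rcases hm : mu i with _ | _ | m
  · simp only [zero_add, Nat.fib_one]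
    lia
  · simp only [zero_add, Nat.reduceAdd, Nat.fib_two]
    lia
  · by_contra! hlt
    have : mu i ≤ m + 1 := Nat.sInf_le ⟨m.succ_pos, hlt⟩
    lia

end Wythoff

/-- `μ_i = ⌊log_φ(2w₊(i))⌋`. -/
theorem mu_eq_floor_logb (i : ℕ) (hi : 0 < i) :
    (mu i : ℤ) = ⌊Real.logb phi (2 * wplus i)⌋ := by
  have hlower : φ ^ mu i ≤ 2 * wplus i :=
    not_lt.1 ((two_mul_W_one_lt_fib_iff hi).not.1 (fib_mu_add_one_le hi).not_gt)
  have hupper : 2 * wplus i < φ ^ (mu i + 1) :=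
    (two_mul_W_one_lt_fib_iff hi).1 (two_mul_W_one_lt_fib_mu_add_two i)
  rw [eq_comm, phi_eq_goldenRatio,
    floor_logb_eq_iff one_lt_goldenRatio (mul_pos two_pos (wplus_pos hi))]
  exact_mod_cast And.intro hlower hupper
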